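/- arXiv:1501.04124 — 3 statements merged into one kernel-verified Lean document; each statement's English description precedes it below -/
import Mathlib

section
/- Let F be a holomorphic function on a neighborhood of 0 in ℂ with F(0) = 0 and F′(0) ≠ 0. Then there exist constants C > 0 and δ ∈ (0,1) such that for all z with 0 < |z| < δ one has 0 < |F(z)| < 1 and |1/log(1/|F(z)|) − 1/log(1/|z|)| ≤ C·(1/log(1/|z|))². That is, ilog|F(z)| = ilog|z| + O((ilog|z|)²) as z → 0. -/
/-!
If `F 0 = 0` and the derivative of `F` at `0` is an embedding (for a holomorphic function of one
variable: if the zero is simple), then `‖F z‖` is comparable to `‖z‖`, so `log ‖F z‖` and `log ‖z‖`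
differ by a bounded amount. Both tend to `-∞`, and when `a` and `b` are large with `a - b` bounded,
`a⁻¹ - b⁻¹ = a⁻¹ (b - a) b⁻¹` is at most of the order of `b⁻²`.
-/

open Real

open Filter Asymptotics Topology

/-- The inverse logarithm that turns a boundary defining function `r` into the logarithmic one
`ilog r`, which tends to `0` with `r > 0` but more slowly than any positive power of `r`. The
meaningful range is `0 < x < 1`; elsewhere the conventions for `Real.log` and division apply. -/
noncomputable def ilog (x : ℝ) : ℝ := 1 / log (1 / x)

lemma ilog_eq_neg_inv_log (x : ℝ) : ilog x = -(log x)⁻¹ := by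
  rw [ilog, one_div, one_div, log_inv, inv_neg]

lemma log_sub_log_le_log_of_abs_le_mul {a b c : ℝ} (ha : a ≠ 0) (hb : b ≠ 0)
    (h : |a| ≤ c * |b|) : log a - log b ≤ log c := by
  rw [← log_div ha hb, ← log_abs, abs_div]
  exact log_le_log (by positivity) ((div_le_iff₀ (abs_pos.mpr hb)).mpr h)

section Asymptotics

variable {α : Type*} {l : Filter α}

lemma isBigO_log_sub_log_of_isTheta {u v : α → ℝ} (h : u =Θ[l] v) :
    (fun x ↦ log (u x) - log (v x)) =O[l] (1 : α → ℝ) := by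
  obtain ⟨c, hc⟩ := h.isBigO.bound
  obtain ⟨d, hd⟩ := h.isBigO_symm.bound
  refine .of_bound (max |log c| |log d|) ?_
  filter_upwards [hc, hd, h.eq_zero_iff] with x huv hvu h_zero
  rw [Pi.one_apply, norm_one, mul_one, norm_eq_abs]
  by_cases hv : v x = 0
  · simp [hv, h_zero.mpr hv]
  · have hu : u x ≠ 0 := mt h_zero.mp hv
    have huv_log : log (u x) - log (v x) ≤ log c := log_sub_log_le_log_of_abs_le_mul hu hv huv
    have hvu_log : log (v x) - log (u x) ≤ log d := log_sub_log_le_log_of_abs_le_mul hv hu hvu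
    exact abs_sub_le_iff.mpr ⟨le_max_of_le_left (huv_log.trans (le_abs_self _)),
      le_max_of_le_right (hvu_log.trans (le_abs_self _))⟩

lemma isBigO_inv_sub_inv_of_isBigO_sub_one {𝕜 : Type*} [NormedField 𝕜] {f g : α → 𝕜}
    (hfg : (f - g) =O[l] (1 : α → 𝕜)) (hg : Tendsto (fun x ↦ ‖g x‖) l atTop) :
    (fun x ↦ (f x)⁻¹ - (g x)⁻¹) =O[l] fun x ↦ (g x)⁻¹ ^ 2 := by
  have h_equiv : f ~[l] g := hfg.trans_isLittleO ((isLittleO_one_left_iff 𝕜).mpr hg)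
  have hg_ne : ∀ᶠ x in l, g x ≠ 0 :=
    (hg.eventually_gt_atTop 0).mono fun _ ↦ norm_pos_iff.mp
  have hf_ne : ∀ᶠ x in l, f x ≠ 0 := by
    filter_upwards [h_equiv.isTheta.eq_zero_iff, hg_ne] with x hx using mt hx.mp
  have h_prod : (fun x ↦ (f x)⁻¹ * (g x - f x) * (g x)⁻¹) =O[l] fun x ↦ (g x)⁻¹ * 1 * (g x)⁻¹ :=
    (h_equiv.inv.isBigO.mul hfg.symm).mul (isBigO_refl _ l)
  refine h_prod.congr' ?_ (.of_forall fun x ↦ by ring)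
  filter_upwards [hf_ne, hg_ne] with x hfx hgx using (inv_sub_inv' hfx hgx).symm

lemma isBigO_ilog_sub_ilog_of_isTheta {u v : α → ℝ} (h : u =Θ[l] v)
    (hv : Tendsto v l (𝓝[≠] 0)) :
    (fun x ↦ ilog (u x) - ilog (v x)) =O[l] fun x ↦ ilog (v x) ^ 2 := by
  have h_log : Tendsto (fun x ↦ ‖log (v x)‖) l atTop :=
    tendsto_abs_atBot_atTop.comp (tendsto_log_nhdsNE_zero.comp hv)
  simpa only [ilog_eq_neg_inv_log, neg_sq, neg_sub_neg] using
    (isBigO_inv_sub_inv_of_isBigO_sub_one (isBigO_log_sub_log_of_isTheta h) h_log).symm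

end Asymptotics

theorem ilog_welldefined_up_to_quadratic_general {𝕜 E G : Type*} [NontriviallyNormedField 𝕜]
    [NormedAddCommGroup E] [NormedSpace 𝕜 E] [NormedAddCommGroup G] [NormedSpace 𝕜 G]
    {F : E → G} {F' : E →L[𝕜] G} (hF : HasFDerivAt F F' 0) (hF0 : F 0 = 0)
    (hF' : IsInducing F') :
    ∃ C > (0 : ℝ), ∃ δ ∈ Set.Ioo (0 : ℝ) 1, ∀ z : E, 0 < ‖z‖ → ‖z‖ < δ →
      0 < ‖F z‖ ∧ ‖F z‖ < 1 ∧ |ilog ‖F z‖ - ilog ‖z‖| ≤ C * ilog ‖z‖ ^ 2 := by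
  have h_theta : F =Θ[𝓝[≠] 0] (fun z ↦ z) := by
    simpa only [hF0, sub_zero] using (hF.isTheta_sub hF').mono nhdsWithin_le_nhds
  have h_pos : ∀ᶠ z in 𝓝[≠] (0 : E), 0 < ‖F z‖ := by
    filter_upwards [h_theta.eq_zero_iff, self_mem_nhdsWithin] with z hFz hz
    exact norm_pos_iff.mpr (mt hFz.mp hz)
  have h_lt_one : ∀ᶠ z in 𝓝[≠] (0 : E), ‖F z‖ < 1 := by
    have h_lim : Tendsto (fun z ↦ ‖F z‖) (𝓝 0) (𝓝 0) := by
      simpa [ContinuousAt, hF0] using hF.continuousAt.norm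
    exact (h_lim.mono_left nhdsWithin_le_nhds).eventually_lt_const one_pos
  obtain ⟨C, hC, h_bound⟩ := (isBigO_ilog_sub_ilog_of_isTheta h_theta.norm_left.norm_right
    (tendsto_norm_nhdsNE_zero.mono_right (nhdsGT_le_nhdsNE 0))).exists_pos
  obtain ⟨ε, hε, h_ball⟩ := Metric.mem_nhdsWithin_iff.mp (h_pos.and (h_lt_one.and h_bound.bound))
  refine ⟨C, hC, min ε (1 / 2), ⟨by positivity, (min_le_right _ _).trans_lt one_half_lt_one⟩,
    fun z hz_pos hz_lt ↦ ?_⟩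
  obtain ⟨hFz_pos, hFz_lt, hFz⟩ := h_ball
    ⟨mem_ball_zero_iff.mpr (hz_lt.trans_le (min_le_left _ _)), norm_pos_iff.mp hz_pos⟩
  exact ⟨hFz_pos, hFz_lt, by simpa using hFz⟩

/-- If `F` is holomorphic near `0 ∈ ℂ` with `F(0) = 0` and `F′(0) ≠ 0`, then
`ilog|F(z)| = ilog|z| + O((ilog|z|)²)` as `z → 0`, where `ilog x = 1/log(1/x)`:
the logarithmic boundary defining function is well defined up to a
quadratically vanishing term. -/
theorem ilog_welldefined_up_to_quadratic (F : ℂ → ℂ) (U : Set ℂ)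
    (hU : IsOpen U) (h0 : (0 : ℂ) ∈ U) (hF : DifferentiableOn ℂ F U)
    (hF0 : F 0 = 0) (hF' : deriv F 0 ≠ 0) :
    ∃ C > (0 : ℝ), ∃ δ ∈ Set.Ioo (0 : ℝ) 1, ∀ z : ℂ, 0 < ‖z‖ → ‖z‖ < δ →
      0 < ‖F z‖ ∧ ‖F z‖ < 1 ∧
      |1 / Real.log (1 / ‖F z‖) - 1 / Real.log (1 / ‖z‖)| ≤
        C * (1 / Real.log (1 / ‖z‖)) ^ 2 :=
  ilog_welldefined_up_to_quadratic_general
    ((hF.differentiableAt (hU.mem_nhds h0)).hasDerivAt.hasFDerivAt_equiv hF') hF0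
    (ContinuousLinearEquiv.unitsEquivAut ℂ (.mk0 _ hF')).toHomeomorph.isInducing
end

section
/- Suppose u : [0,1] → ℝ is twice continuously differentiable on [0,1] and satisfies 2π²·u(ρ) = sin²(πρ)·u″(ρ) for all ρ ∈ (0,1). Then u is identically zero. -/
open Real Set

/-!
Let `u = c • u″` on `(a, b)` with `c ≥ 0`. Then `⟪u, u″⟫ = c ‖u″‖² ≥ 0`, so
`(‖u‖²)″ = 2 (‖u′‖² + ⟪u, u″⟫) ≥ 0` and `‖u‖²` is convex. As `u″` extends continuously to `[a, b]`,
so does the equation, and `u` vanishes at an endpoint wherever `c` does. A convex function on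
`[a, b]` is at most the larger of its endpoint values, which here are both `0`.
-/

theorem differentiableOn_deriv_interior_of_contDiffOn {𝕜 E : Type*} [NontriviallyNormedField 𝕜]
    [NormedAddCommGroup E] [NormedSpace 𝕜 E] {u : 𝕜 → E} {s : Set 𝕜} (hu : ContDiffOn 𝕜 2 u s) :
    DifferentiableOn 𝕜 (deriv u) (interior s) :=
  ((hu.mono interior_subset).deriv_of_isOpen (m := 1) isOpen_interior
    one_add_one_eq_two.le).differentiableOn one_ne_zero

section NormedSpace

variable {E : Type*} [NormedAddCommGroup E] [NormedSpace ℝ E] {u : ℝ → E}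

theorem eq_smul_iteratedDerivWithin_Icc_of_Ioo {n : ℕ} {c : ℝ → ℝ} {a b : ℝ} (hab : a < b)
    (hu : ContDiffOn ℝ n u (Icc a b)) (hc : ContinuousOn c (Icc a b))
    (heq : ∀ x ∈ Ioo a b, u x = c x • iteratedDeriv n u x) :
    ∀ x ∈ Icc a b, u x = c x • iteratedDerivWithin n u (Icc a b) x := by
  have hcont : ContinuousOn (iteratedDerivWithin n u (Icc a b)) (Icc a b) :=
    hu.continuousOn_iteratedDerivWithin le_rfl (uniqueDiffOn_Icc hab)
  have hIoo : EqOn u (fun x ↦ c x • iteratedDerivWithin n u (Icc a b) x) (Ioo a b) := by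
    intro x hx
    have hux : ContDiffAt ℝ n u x := hu.contDiffAt (Icc_mem_nhds hx.1 hx.2)
    simpa only [iteratedDerivWithin_eq_iteratedDeriv (uniqueDiffOn_Icc hab) hux
      (Ioo_subset_Icc_self hx)] using heq x hx
  exact hIoo.of_subset_closure hu.continuousOn (hc.smul hcont) Ioo_subset_Icc_self
    (closure_Ioo hab.ne).ge

theorem eq_zero_of_eq_smul_iteratedDeriv_Ioo {n : ℕ} {c : ℝ → ℝ} {a b x : ℝ} (hab : a < b)
    (hu : ContDiffOn ℝ n u (Icc a b)) (hc : ContinuousOn c (Icc a b))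
    (heq : ∀ x ∈ Ioo a b, u x = c x • iteratedDeriv n u x)
    (hx : x ∈ Icc a b) (hcx : c x = 0) : u x = 0 := by
  simpa only [hcx, zero_smul] using eq_smul_iteratedDerivWithin_Icc_of_Ioo hab hu hc heq x hx

end NormedSpace

section InnerProductSpace

variable {E : Type*} [NormedAddCommGroup E] [InnerProductSpace ℝ E] {u : ℝ → E}

theorem convexOn_norm_sq_of_inner_deriv2_nonneg {s : Set ℝ} (hs : Convex ℝ s)
    (hu : ContinuousOn u s) (hu' : DifferentiableOn ℝ u (interior s))
    (hu'' : DifferentiableOn ℝ (deriv u) (interior s))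
    (hinner : ∀ x ∈ interior s, 0 ≤ inner ℝ (u x) (deriv (deriv u) x)) :
    ConvexOn ℝ s (fun x ↦ ‖u x‖ ^ 2) := by
  have hd : ∀ x ∈ interior s, HasDerivAt u (deriv u x) x := fun x hx ↦
    (hu'.differentiableAt (isOpen_interior.mem_nhds hx)).hasDerivAt
  have hd' : ∀ x ∈ interior s, HasDerivAt (deriv u) (deriv (deriv u) x) x := fun x hx ↦
    (hu''.differentiableAt (isOpen_interior.mem_nhds hx)).hasDerivAt
  refine convexOn_of_hasDerivWithinAt2_nonneg hs (hu.norm.pow 2)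
    (fun x hx ↦ (hd x hx).norm_sq.hasDerivWithinAt)
    (fun x hx ↦ (((hd x hx).inner ℝ (hd' x hx)).const_mul 2).hasDerivWithinAt) fun x hx ↦ ?_
  exact mul_nonneg zero_le_two (add_nonneg (hinner x hx) real_inner_self_nonneg)

theorem convexOn_norm_sq_of_eq_smul_deriv2 {c : ℝ → ℝ} {s : Set ℝ} (hs : Convex ℝ s)
    (hu : ContinuousOn u s) (hu' : DifferentiableOn ℝ u (interior s))
    (hu'' : DifferentiableOn ℝ (deriv u) (interior s)) (hc : ∀ x ∈ interior s, 0 ≤ c x)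
    (heq : ∀ x ∈ interior s, u x = c x • deriv (deriv u) x) :
    ConvexOn ℝ s (fun x ↦ ‖u x‖ ^ 2) := by
  refine convexOn_norm_sq_of_inner_deriv2_nonneg hs hu hu' hu'' fun x hx ↦ ?_
  calc 0 ≤ c x * inner ℝ (deriv (deriv u) x) (deriv (deriv u) x) :=
        mul_nonneg (hc x hx) real_inner_self_nonneg
    _ = inner ℝ (c x • deriv (deriv u) x) (deriv (deriv u) x) := (real_inner_smul_left _ _ _).symm
    _ = inner ℝ (u x) (deriv (deriv u) x) := by rw [← heq x hx]

theorem reduced_operator_no_smooth_nullspace_general {c : ℝ → ℝ} {a b : ℝ} (hab : a < b)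
    (hu : ContDiffOn ℝ 2 u (Icc a b)) (hc : ContinuousOn c (Icc a b))
    (hc_nonneg : ∀ x ∈ Ioo a b, 0 ≤ c x) (hca : c a = 0) (hcb : c b = 0)
    (heq : ∀ x ∈ Ioo a b, u x = c x • deriv (deriv u) x) :
    ∀ x ∈ Icc a b, u x = 0 := by
  intro x hx
  have hconvex : ConvexOn ℝ (Icc a b) (fun x ↦ ‖u x‖ ^ 2) :=
    convexOn_norm_sq_of_eq_smul_deriv2 (convex_Icc a b) hu.continuousOn
      ((hu.differentiableOn two_ne_zero).mono interior_subset)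
      (differentiableOn_deriv_interior_of_contDiffOn hu)
      (by rwa [interior_Icc]) (by rwa [interior_Icc])
  have heq' : ∀ x ∈ Ioo a b, u x = c x • iteratedDeriv 2 u x := by
    simpa only [iteratedDeriv_succ, iteratedDeriv_zero] using heq
  have hua : u a = 0 :=
    eq_zero_of_eq_smul_iteratedDeriv_Ioo hab hu hc heq' (left_mem_Icc.2 hab.le) hca
  have hub : u b = 0 :=
    eq_zero_of_eq_smul_iteratedDeriv_Ioo hab hu hc heq' (right_mem_Icc.2 hab.le) hcb
  have hnorm : ‖u x‖ ^ 2 ≤ 0 := by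
    simpa [hua, hub] using
      hconvex.le_max_of_mem_Icc (left_mem_Icc.2 hab.le) (right_mem_Icc.2 hab.le) hx
  simpa using hnorm.antisymm (sq_nonneg _)

end InnerProductSpace

/-- If `u` is twice continuously differentiable on `[0,1]` and satisfies
`2π²·u(ρ) = sin²(πρ)·u″(ρ)` on `(0,1)`, then `u ≡ 0`: the null space of the
reduced operator `Λ̃_{II} + 2` contains no elements smooth up to both
endpoints. -/
theorem reduced_operator_no_smooth_nullspace (u : ℝ → ℝ)
    (hu : ContDiffOn ℝ 2 u (Set.Icc 0 1))
    (heq : ∀ ρ ∈ Set.Ioo (0 : ℝ) 1,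
      2 * Real.pi ^ 2 * u ρ = Real.sin (Real.pi * ρ) ^ 2 * deriv (deriv u) ρ) :
    ∀ ρ ∈ Set.Icc (0 : ℝ) 1, u ρ = 0 := by
  refine reduced_operator_no_smooth_nullspace_general (c := fun ρ ↦ sin (π * ρ) ^ 2 / (2 * π ^ 2))
    zero_lt_one hu (by fun_prop) (fun _ _ ↦ by positivity) (by simp) (by simp) fun ρ hρ ↦ ?_
  rw [smul_eq_mul, div_mul_eq_mul_div, eq_div_iff (by positivity), ← heq ρ hρ, mul_comm]
end

section
/- For every pair (a, b) ∈ ℝ² there exists exactly one twice continuously differentiable function u : (0,1) → ℝ satisfying 2π²·u(ρ) = sin²(πρ)·u″(ρ) on (0,1) together with the boundary conditions lim_{ρ→0⁺} ρ·u(ρ) = a and lim_{ρ→1⁻} (1−ρ)·u(ρ) = b. -/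
open Real Set Filter

/-- `u` solves the reduced ODE `2π²u = sin²(πρ)u″` on `(0,1)` with the singular
boundary data `ρ·u(ρ) → a` at `ρ = 0` and `(1−ρ)·u(ρ) → b` at `ρ = 1`. -/
def IsReducedSol (a b : ℝ) (u : ℝ → ℝ) : Prop :=
  ContDiffOn ℝ 2 u (Set.Ioo 0 1) ∧
  (∀ ρ ∈ Set.Ioo (0 : ℝ) 1,
    2 * Real.pi ^ 2 * u ρ = Real.sin (Real.pi * ρ) ^ 2 * deriv (deriv u) ρ) ∧
  Filter.Tendsto (fun ρ => ρ * u ρ) (nhdsWithin 0 (Set.Ioi 0)) (nhds a) ∧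
  Filter.Tendsto (fun ρ => (1 - ρ) * u ρ) (nhdsWithin 1 (Set.Iio 1)) (nhds b)

/-!
Since `y = π cot (πρ)` satisfies the Riccati equation `y′ = -(π² + y²)`, the function
`y (a - (a + b) ρ) + (a + b)` solves `u″ = 2 (π² + y²) u`, which is the equation in question; its
boundary data are `(a, b)`.

Uniqueness is a maximum principle of Phragmén–Lindelöf type for `u″ = q u` with `q > 0`. The
difference `w` of two solutions with the same data is negligible at both ends against the solution
`p` with data `(1, 1)`, so `w - ε p` is nonpositive near the ends for every `ε > 0`. It is then
nonpositive throughout, because `u″ > 0` wherever a solution `u` is positive, which rules out a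
positive interior maximum. Letting `ε → 0` gives `w ≤ 0`, and likewise `-w ≤ 0`.
-/

open Topology Asymptotics

theorem exists_mem_Ioo_isMaxOn {X Y : Type*} [LinearOrder X] [TopologicalSpace X]
    [OrderTopology X] [CompactIccSpace X] [LinearOrder Y] [TopologicalSpace Y]
    [ClosedIciTopology Y] {f : X → Y} {α β y : X} (hf : ContinuousOn f (Ioo α β))
    (hy : y ∈ Ioo α β) (hle : ∀ᶠ x in 𝓝[>] α ⊔ 𝓝[<] β, f x ≤ f y) :
    ∃ m ∈ Ioo α β, IsMaxOn f (Ioo α β) m := by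
  obtain ⟨hα, hβ⟩ := eventually_sup.1 hle
  obtain ⟨l, hαl, hl⟩ := (mem_nhdsGT_iff_exists_Ioo_subset' hy.1).1 hα
  obtain ⟨r, hrβ, hr⟩ := (mem_nhdsLT_iff_exists_Ioo_subset' hy.2).1 hβ
  have hyK : y ∈ Icc (min l y) (max r y) := ⟨min_le_right _ _, le_max_right _ _⟩
  have hK : Icc (min l y) (max r y) ⊆ Ioo α β :=
    Icc_subset_Ioo (lt_min hαl hy.1) (max_lt hrβ hy.2)
  obtain ⟨m, hm, hmax⟩ := isCompact_Icc.exists_isMaxOn ⟨y, hyK⟩ (hf.mono hK)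
  refine ⟨m, hK hm, fun x hx ↦ ?_⟩
  rcases lt_or_ge x (min l y) with hxl | hxl
  · exact (hl ⟨hx.1, hxl.trans_le (min_le_left _ _)⟩).trans (hmax hyK)
  rcases lt_or_ge (max r y) x with hxr | hxr
  · exact (hr ⟨(le_max_left _ _).trans_lt hxr, hx.2⟩).trans (hmax hyK)
  · exact hmax ⟨hxl, hxr⟩

theorem deriv_deriv_nonpos_of_isLocalMax {f : ℝ → ℝ} {x : ℝ} (hf : IsLocalMax f x)
    (hc : ContinuousAt f x) : deriv (deriv f) x ≤ 0 := by
  by_contra! hpos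
  -- The second derivative test makes `x` a local minimum too, so `f` is constant near `x`.
  have hmin : IsLocalMin f x := isLocalMin_of_deriv_deriv_pos hpos hf.deriv_eq_zero hc
  have hconst : f =ᶠ[𝓝 x] fun _ ↦ f x := by
    filter_upwards [hf, hmin] with y using le_antisymm
  have hzero : deriv (deriv f) x = 0 := by simp [hconst.deriv.deriv_eq]
  exact hpos.ne' hzero

theorem nonpos_of_deriv_deriv_pos_of_pos {f : ℝ → ℝ} {α β : ℝ} (hf : ContinuousOn f (Ioo α β))
    (hconv : ∀ x ∈ Ioo α β, 0 < f x → 0 < deriv (deriv f) x)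
    (hends : ∀ᶠ x in 𝓝[>] α ⊔ 𝓝[<] β, f x ≤ 0) {x : ℝ} (hx : x ∈ Ioo α β) : f x ≤ 0 := by
  by_contra! hpos
  obtain ⟨m, hm, hmax⟩ :=
    exists_mem_Ioo_isMaxOn hf hx (hends.mono fun _ hy ↦ hy.trans hpos.le)
  have hnhds : Ioo α β ∈ 𝓝 m := isOpen_Ioo.mem_nhds hm
  exact (hconv m hm (hpos.trans_le (hmax hx))).not_ge
    (deriv_deriv_nonpos_of_isLocalMax (hmax.isLocalMax hnhds) (hf.continuousAt hnhds))

/-- The space of solutions on `s` of the linear second-order equation `u″ = q u` in normal form.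
Functions are total; nothing is required of them outside a neighbourhood of `s`. -/
def normalFormSolutions (q : ℝ → ℝ) (s : Set ℝ) : Submodule ℝ (ℝ → ℝ) where
  carrier := {u | ∀ x ∈ s, ContDiffAt ℝ 2 u x ∧ iteratedDeriv 2 u x = q x * u x}
  zero_mem' x _ := ⟨contDiffAt_const, by simp⟩
  add_mem' hu hv x hx := by
    refine ⟨(hu x hx).1.add (hv x hx).1, ?_⟩
    rw [iteratedDeriv_add (hu x hx).1 (hv x hx).1, (hu x hx).2, (hv x hx).2, Pi.add_apply, mul_add]
  smul_mem' c u hu x hx := by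
    refine ⟨(hu x hx).1.const_smul c, ?_⟩
    rw [iteratedDeriv_const_smul_field, (hu x hx).2, Pi.smul_apply, mul_smul_comm]

namespace normalFormSolutions

variable {q u w p : ℝ → ℝ} {α β : ℝ}

theorem nonpos (hq : ∀ x ∈ Ioo α β, 0 < q x) (hu : u ∈ normalFormSolutions q (Ioo α β))
    (hends : ∀ᶠ x in 𝓝[>] α ⊔ 𝓝[<] β, u x ≤ 0) {x : ℝ} (hx : x ∈ Ioo α β) : u x ≤ 0 := by
  refine nonpos_of_deriv_deriv_pos_of_pos
    (fun y hy ↦ (hu y hy).1.continuousAt.continuousWithinAt) (fun y hy hpos ↦ ?_) hends hx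
  have hode : deriv (deriv u) y = q y * u y := by
    simpa only [iteratedDeriv_succ, iteratedDeriv_zero] using (hu y hy).2
  exact hode ▸ mul_pos (hq y hy) hpos

theorem nonpos_of_isLittleO (hq : ∀ x ∈ Ioo α β, 0 < q x)
    (hw : w ∈ normalFormSolutions q (Ioo α β)) (hp : p ∈ normalFormSolutions q (Ioo α β))
    (hp_nonneg : ∀ᶠ x in 𝓝[>] α ⊔ 𝓝[<] β, 0 ≤ p x) (hwp : w =o[𝓝[>] α ⊔ 𝓝[<] β] p)
    {x : ℝ} (hx : x ∈ Ioo α β) : w x ≤ 0 := by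
  have hle : ∀ ε > 0, w x ≤ ε * p x := fun ε hε ↦ by
    refine sub_nonpos.1 (nonpos hq (sub_mem hw (Submodule.smul_mem _ ε hp)) ?_ hx)
    filter_upwards [hp_nonneg, hwp.bound hε] with y hpy hwy
    rw [norm_of_nonneg hpy] at hwy
    exact sub_nonpos.2 ((le_norm_self _).trans hwy)
  have hlim : Tendsto (fun ε ↦ ε * p x) (𝓝[>] 0) (𝓝 0) := by
    simpa using (tendsto_id.mul_const (p x)).mono_left (nhdsWithin_le_nhds (a := 0) (s := Ioi 0))
  exact ge_of_tendsto hlim (eventually_mem_nhdsWithin.mono hle)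

theorem eqOn_zero_of_isLittleO (hq : ∀ x ∈ Ioo α β, 0 < q x)
    (hw : w ∈ normalFormSolutions q (Ioo α β)) (hp : p ∈ normalFormSolutions q (Ioo α β))
    (hp_nonneg : ∀ᶠ x in 𝓝[>] α ⊔ 𝓝[<] β, 0 ≤ p x) (hwp : w =o[𝓝[>] α ⊔ 𝓝[<] β] p) :
    EqOn w 0 (Ioo α β) := fun _ hx ↦
  le_antisymm (nonpos_of_isLittleO hq hw hp hp_nonneg hwp hx)
    (neg_nonpos.1 (nonpos_of_isLittleO hq (neg_mem hw) hp hp_nonneg hwp.neg_left hx))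

end normalFormSolutions

theorem iteratedDeriv_two_eq_of_hasDerivAt {𝕜 F : Type*} [NontriviallyNormedField 𝕜]
    [NormedAddCommGroup F] [NormedSpace 𝕜 F] {f f' : 𝕜 → F} {f'' : F} {x : 𝕜}
    (hf : ∀ᶠ t in 𝓝 x, HasDerivAt f (f' t) t) (hf' : HasDerivAt f' f'' x) :
    iteratedDeriv 2 f x = f'' := by
  have hderiv : deriv f =ᶠ[𝓝 x] f' := hf.mono fun _ ht ↦ ht.deriv
  rw [iteratedDeriv_succ, iteratedDeriv_one, hderiv.deriv_eq, hf'.deriv]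

theorem iteratedDeriv_two_of_riccati {𝕜 : Type*} [NontriviallyNormedField 𝕜] {y : 𝕜 → 𝕜}
    {k a s x : 𝕜} (hy : ∀ᶠ t in 𝓝 x, HasDerivAt y (-(k + y t ^ 2)) t) :
    iteratedDeriv 2 (fun t ↦ y t * (a - s * t) + s) x =
      2 * (k + y x ^ 2) * (y x * (a - s * x) + s) := by
  have haffine (t : 𝕜) : HasDerivAt (fun t ↦ a - s * t) (-s) t := by
    simpa using ((hasDerivAt_id t).const_mul s).const_sub a
  refine iteratedDeriv_two_eq_of_hasDerivAt
    (hy.mono fun t ht ↦ (ht.mul (haffine t)).add_const s) ?_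
  have hyx : HasDerivAt y (-(k + y x ^ 2)) x := hy.self_of_nhds
  refine (((hyx.pow 2).const_add k).neg.mul (haffine x)).add
    (hyx.mul_const (-s)) |>.congr_deriv ?_
  simp only [Nat.cast_ofNat, Nat.add_one_sub_one, pow_one, neg_add_rev, neg_mul, Pi.pow_apply,
    Pi.neg_apply, mul_neg]
  ring

theorem isLittleO_of_tendsto_mul {ι 𝕜 : Type*} [NormedField 𝕜] {l : Filter ι} {g w p : ι → 𝕜}
    {c : 𝕜} (hc : c ≠ 0) (hw : Tendsto (fun x ↦ g x * w x) l (𝓝 0))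
    (hp : Tendsto (fun x ↦ g x * p x) l (𝓝 c)) : w =o[l] p := by
  have hne : ∀ᶠ x in l, g x * p x ≠ 0 := hp.eventually_ne hc
  refine isLittleO_of_tendsto' (hne.mono fun x hx h ↦ absurd h (right_ne_zero_of_mul hx)) ?_
  refine (zero_div c ▸ hw.div hp hc).congr' (hne.mono fun x hx ↦ ?_)
  exact mul_div_mul_left _ _ (left_ne_zero_of_mul hx)

theorem eventually_pos_of_tendsto_mul {ι R : Type*} [Semiring R] [LinearOrder R]
    [IsStrictOrderedRing R] [TopologicalSpace R] [OrderTopology R] {l : Filter ι} {g p : ι → R}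
    {c : R} (hc : 0 < c) (hg : ∀ᶠ x in l, 0 ≤ g x) (hp : Tendsto (fun x ↦ g x * p x) l (𝓝 c)) :
    ∀ᶠ x in l, 0 < p x := by
  filter_upwards [hg, hp.eventually_const_lt hc] with x hgx hpx using pos_of_mul_pos_right hpx hgx

theorem tendsto_const_sub_nhdsLT {G : Type*} [AddCommGroup G] [LinearOrder G]
    [IsOrderedAddMonoid G] [TopologicalSpace G] [ContinuousSub G] (c x : G) :
    Tendsto (fun y ↦ c - y) (𝓝[<] x) (𝓝[>] (c - x)) :=
  (continuous_sub_left c).continuousWithinAt.tendsto_nhdsWithin fun _ hy ↦ sub_lt_sub_left hy c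

theorem contDiffAt_cot {x : ℝ} {n : WithTop ℕ∞} (hx : sin x ≠ 0) : ContDiffAt ℝ n cot x := by
  rw [funext cot_eq_cos_div_sin]
  exact contDiff_cos.contDiffAt.div contDiff_sin.contDiffAt hx

theorem hasDerivAt_cot {x : ℝ} (hx : sin x ≠ 0) : HasDerivAt cot (-(1 + cot x ^ 2)) x := by
  rw [funext cot_eq_cos_div_sin]
  refine ((hasDerivAt_cos x).div (hasDerivAt_sin x) hx).congr_deriv ?_
  field_simp
  ring

theorem hasDerivAt_const_mul_cot {c x : ℝ} (hx : sin (c * x) ≠ 0) :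
    HasDerivAt (fun t ↦ c * cot (c * t)) (-(c ^ 2 + (c * cot (c * x)) ^ 2)) x := by
  have hlin : HasDerivAt (fun t ↦ c * t) c x := by simpa using (hasDerivAt_id x).const_mul c
  refine (((hasDerivAt_cot hx).comp x hlin).const_mul c).congr_deriv ?_
  ring

theorem one_add_cot_sq {x : ℝ} (hx : sin x ≠ 0) : 1 + cot x ^ 2 = (sin x ^ 2)⁻¹ := by
  rw [cot_eq_cos_div_sin]
  field_simp
  exact sin_sq_add_cos_sq x

theorem cot_pi_sub (x : ℝ) : cot (π - x) = -cot x := by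
  rw [cot_eq_cos_div_sin, cot_eq_cos_div_sin, cos_pi_sub, sin_pi_sub, neg_div]

theorem tendsto_mul_cot_nhdsNE_zero : Tendsto (fun x ↦ x * cot x) (𝓝[≠] 0) (𝓝 1) := by
  have hlim : Tendsto (fun x ↦ cos x / sinc x) (𝓝 0) (𝓝 1) := by
    simpa [Pi.div_def] using continuous_cos.continuousAt.tendsto.div
      continuous_sinc.continuousAt.tendsto (by simp : sinc 0 ≠ 0)
  refine (hlim.mono_left nhdsWithin_le_nhds).congr' ?_
  filter_upwards [self_mem_nhdsWithin] with x hx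
  rw [sinc_of_ne_zero hx, cot_eq_cos_div_sin, div_div_eq_mul_div, mul_comm, mul_div_assoc]

/-- The coefficient `q` in the normal form `u″ = q u` of the reduced equation. -/
noncomputable def reducedPotential (ρ : ℝ) : ℝ := 2 * π ^ 2 / sin (π * ρ) ^ 2

theorem sin_pi_mul_pos {ρ : ℝ} (hρ : ρ ∈ Ioo (0 : ℝ) 1) : 0 < sin (π * ρ) :=
  sin_pos_of_pos_of_lt_pi (mul_pos pi_pos hρ.1) (mul_lt_of_lt_one_right pi_pos hρ.2)

theorem reducedPotential_pos {ρ : ℝ} (hρ : ρ ∈ Ioo (0 : ℝ) 1) : 0 < reducedPotential ρ := by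
  have := sin_pi_mul_pos hρ
  unfold reducedPotential
  positivity

theorem isReducedSol_iff {a b : ℝ} {u : ℝ → ℝ} :
    IsReducedSol a b u ↔ u ∈ normalFormSolutions reducedPotential (Ioo 0 1) ∧
      Tendsto (fun ρ ↦ ρ * u ρ) (𝓝[>] 0) (𝓝 a) ∧
      Tendsto (fun ρ ↦ (1 - ρ) * u ρ) (𝓝[<] 1) (𝓝 b) := by
  have hode : ∀ ρ ∈ Ioo (0 : ℝ) 1,
      (2 * π ^ 2 * u ρ = sin (π * ρ) ^ 2 * deriv (deriv u) ρ ↔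
        iteratedDeriv 2 u ρ = reducedPotential ρ * u ρ) := fun ρ hρ ↦ by
    have hsin : sin (π * ρ) ^ 2 ≠ 0 := pow_ne_zero 2 (sin_pi_mul_pos hρ).ne'
    rw [reducedPotential, div_mul_eq_mul_div, eq_div_iff hsin, iteratedDeriv_succ,
      iteratedDeriv_one, eq_comm, mul_comm (sin _ ^ 2)]
  rw [IsReducedSol, ← and_assoc, isOpen_Ioo.contDiffOn_iff, forall₂_congr hode, ← forall₂_and]
  rfl

/-- The solution of the reduced equation with boundary data `(a, b)`. -/
noncomputable def explicitSol (a b ρ : ℝ) : ℝ :=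
  π * cot (π * ρ) * (a - (a + b) * ρ) + (a + b)

theorem explicitSol_one_sub (a b ρ : ℝ) : explicitSol a b (1 - ρ) = explicitSol b a ρ := by
  rw [explicitSol, explicitSol, mul_one_sub, cot_pi_sub]
  ring

theorem explicitSol_mem_normalFormSolutions (a b : ℝ) :
    explicitSol a b ∈ normalFormSolutions reducedPotential (Ioo 0 1) := fun ρ hρ ↦ by
  have hsin : sin (π * ρ) ≠ 0 := (sin_pi_mul_pos hρ).ne'
  have hcot : ContDiffAt ℝ 2 (fun x ↦ cot (π * x)) ρ :=
    (contDiffAt_cot hsin).comp ρ (contDiffAt_id.const_smul π)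
  refine ⟨((contDiffAt_const.mul hcot).mul (by fun_prop)).add contDiffAt_const, ?_⟩
  have hpot : reducedPotential ρ = 2 * (π ^ 2 + (π * cot (π * ρ)) ^ 2) := by
    rw [reducedPotential, div_eq_mul_inv, ← one_add_cot_sq hsin]
    ring
  rw [hpot]
  refine iteratedDeriv_two_of_riccati ?_
  filter_upwards [isOpen_Ioo.mem_nhds hρ] with x hx
  exact hasDerivAt_const_mul_cot (sin_pi_mul_pos hx).ne'

theorem tendsto_mul_explicitSol_nhdsGT_zero (a b : ℝ) :
    Tendsto (fun ρ ↦ ρ * explicitSol a b ρ) (𝓝[>] 0) (𝓝 a) := by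
  have hpi : Tendsto (fun ρ ↦ π * ρ) (𝓝[>] 0) (𝓝[≠] 0) := by
    refine tendsto_nhdsWithin_iff.2 ⟨?_, ?_⟩
    · simpa using (tendsto_id.const_mul π).mono_left (nhdsWithin_le_nhds (a := 0) (s := Ioi 0))
    · filter_upwards [self_mem_nhdsWithin] with ρ hρ using (mul_pos pi_pos hρ).ne'
  have haffine (c d : ℝ) : Tendsto (fun ρ ↦ c + d * ρ) (𝓝[>] 0) (𝓝 c) := by
    have : ContinuousAt (fun ρ ↦ c + d * ρ) 0 := by fun_prop
    simpa using this.tendsto.mono_left nhdsWithin_le_nhds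
  have hlim := ((tendsto_mul_cot_nhdsNE_zero.comp hpi).mul (haffine a (-(a + b)))).add
    (haffine 0 (a + b))
  rw [one_mul, add_zero] at hlim
  refine hlim.congr fun ρ ↦ ?_
  simp only [Function.comp_apply, explicitSol]
  ring

theorem isReducedSol_explicitSol (a b : ℝ) : IsReducedSol a b (explicitSol a b) := by
  refine isReducedSol_iff.2 ⟨explicitSol_mem_normalFormSolutions a b,
    tendsto_mul_explicitSol_nhdsGT_zero a b, ?_⟩
  have hreflect : Tendsto (fun ρ : ℝ ↦ 1 - ρ) (𝓝[<] 1) (𝓝[>] 0) := by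
    simpa using tendsto_const_sub_nhdsLT (1 : ℝ) 1
  refine ((tendsto_mul_explicitSol_nhdsGT_zero b a).comp hreflect).congr fun ρ ↦ ?_
  rw [Function.comp_apply, explicitSol_one_sub]

theorem IsReducedSol.eqOn {a b : ℝ} {u v : ℝ → ℝ} (hu : IsReducedSol a b u)
    (hv : IsReducedSol a b v) : EqOn u v (Ioo 0 1) := by
  obtain ⟨hu_sol, hu_zero, hu_one⟩ := isReducedSol_iff.1 hu
  obtain ⟨hv_sol, hv_zero, hv_one⟩ := isReducedSol_iff.1 hv
  obtain ⟨hp_sol, hp_zero, hp_one⟩ := isReducedSol_iff.1 (isReducedSol_explicitSol 1 1)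
  have hdiff_zero : Tendsto (fun ρ ↦ ρ * (u - v) ρ) (𝓝[>] 0) (𝓝 0) := by
    simpa [mul_sub] using hu_zero.sub hv_zero
  have hdiff_one : Tendsto (fun ρ ↦ (1 - ρ) * (u - v) ρ) (𝓝[<] 1) (𝓝 0) := by
    simpa [mul_sub] using hu_one.sub hv_one
  have hp_pos : ∀ᶠ ρ in 𝓝[>] 0 ⊔ 𝓝[<] 1, 0 < explicitSol 1 1 ρ := by
    refine eventually_sup.2 ⟨eventually_pos_of_tendsto_mul one_pos ?_ hp_zero,
      eventually_pos_of_tendsto_mul one_pos ?_ hp_one⟩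
    · filter_upwards [self_mem_nhdsWithin] with ρ hρ using le_of_lt hρ
    · filter_upwards [self_mem_nhdsWithin] with ρ hρ using sub_nonneg.2 (le_of_lt hρ)
  have hdiff_isLittleO : (u - v) =o[𝓝[>] 0 ⊔ 𝓝[<] 1] explicitSol 1 1 :=
    (isLittleO_of_tendsto_mul one_ne_zero hdiff_zero hp_zero).sup
      (isLittleO_of_tendsto_mul one_ne_zero hdiff_one hp_one)
  exact fun ρ hρ ↦ sub_eq_zero.1 (normalFormSolutions.eqOn_zero_of_isLittleO
    (fun _ ↦ reducedPotential_pos) (sub_mem hu_sol hv_sol) hp_sol (hp_pos.mono fun _ ↦ le_of_lt)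
      hdiff_isLittleO hρ)

/-- For every `(a,b) ∈ ℝ²` there is exactly one twice continuously
differentiable solution of `2π²u = sin²(πρ)u″` on `(0,1)` with
`ρ·u(ρ) → a` as `ρ → 0⁺` and `(1−ρ)·u(ρ) → b` as `ρ → 1⁻`. -/
theorem reduced_ode_unique_singular_solution (a b : ℝ) :
    ∃ u : ℝ → ℝ, IsReducedSol a b u ∧
      ∀ v : ℝ → ℝ, IsReducedSol a b v → ∀ ρ ∈ Set.Ioo (0 : ℝ) 1, v ρ = u ρ := by
  have hu := isReducedSol_explicitSol a b
  exact ⟨explicitSol a b, hu, fun v hv ↦ hv.eqOn hu⟩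
end
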